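/- arXiv:2211.14186 — 4 statements merged into one kernel-verified Lean document; each statement's English description precedes it below -/
import Mathlib

section
/- Let A be an srl-monoid and a, b, c ∈ A. Then: (1) if a ≤ b → c then a · b ≤ c; (2) if a · b ≤ c then □(a) ≤ b → c. -/
/-!
Multiplication is monotone because it distributes over joins, and `→` is monotone in its second
argument because it distributes over meets there. Part (1) is then `a·b ≤ (b → c)·b ≤ c`.
For part (2), `□a ≤ a` gives `b·□a ≤ a·b ≤ c`, so `□a ≤ (b → b·□a) ≤ (b → c)` by `ax6`.
-/

variable {A : Type*} [Lattice A] [CommMonoid A]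

/-- An srl-monoid structure on a lattice-ordered commutative monoid, with arrow `arr`
and monoid unit `e = 1`. -/
structure IsSRL (arr : A → A → A) : Prop where
  mul_sup : ∀ a b c : A, (a ⊔ b) * c = (a * c) ⊔ (b * c)
  ax1 : ∀ x y : A, (1 : A) ≤ arr (x ⊓ y) y
  ax2 : ∀ x y z : A, arr x y ≤ arr (z ⊓ 1) (arr x y)
  ax3 : ∀ x y : A, x * arr x y ≤ y
  ax4 : ∀ x y z : A, arr z (x ⊓ y) = arr z x ⊓ arr z y
  ax5 : ∀ x y : A, arr 1 (arr 1 x * arr 1 y) = arr 1 x * arr 1 y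
  ax6 : ∀ x y : A, arr 1 y ≤ arr x (x * arr 1 y)

/-- A congruence of an srl-monoid: an equivalence relation compatible with ⊓, ⊔, · and →. -/
def IsCongruence (arr : A → A → A) (θ : A → A → Prop) : Prop :=
  Equivalence θ ∧
  (∀ a b c d : A, θ a b → θ c d → θ (a ⊓ c) (b ⊓ d)) ∧
  (∀ a b c d : A, θ a b → θ c d → θ (a ⊔ c) (b ⊔ d)) ∧
  (∀ a b c d : A, θ a b → θ c d → θ (a * c) (b * d)) ∧
  (∀ a b c d : A, θ a b → θ c d → θ (arr a c) (arr b d))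

/-- A convex subalgebra of an srl-monoid. -/
structure IsConvexSubalgebra (arr : A → A → A) (H : Set A) : Prop where
  one_mem : (1 : A) ∈ H
  inf_mem : ∀ a b : A, a ∈ H → b ∈ H → a ⊓ b ∈ H
  sup_mem : ∀ a b : A, a ∈ H → b ∈ H → a ⊔ b ∈ H
  mul_mem : ∀ a b : A, a ∈ H → b ∈ H → a * b ∈ H
  arr_mem : ∀ a b : A, a ∈ H → b ∈ H → arr a b ∈ H
  convex : ∀ a b c : A, a ∈ H → b ∈ H → a ≤ c → c ≤ b → c ∈ H

/-- A strongly convex subalgebra of an srl-monoid. -/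
structure IsStronglyConvexSubalgebra (arr : A → A → A) (H : Set A) : Prop where
  toConvex : IsConvexSubalgebra arr H
  strong : ∀ a h : A, h ∈ H → a * h ≤ 1 → 1 ≤ arr h a → a ∈ H

/-- `s(a,b) = (a→b) ⊓ (b→a) ⊓ e`. -/
def srlS (arr : A → A → A) (a b : A) : A := arr a b ⊓ arr b a ⊓ 1

/-- `θ_H = {(a,b) : a·h ≤ b and b·h ≤ a for some h ∈ H}`. -/
def thetaH (H : Set A) (a b : A) : Prop := ∃ h ∈ H, a * h ≤ b ∧ b * h ≤ a

/-- Iterates of `□(a) = e → a`: `□⁰(a) = a`, `□¹(a) = □(a)`,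
`□^{n+1}(a) = □(a) · □ⁿ(a)` for `n ≥ 1`. -/
def boxIter (arr : A → A → A) : ℕ → A → A
  | 0, a => a
  | 1, a => arr 1 a
  | n + 2, a => arr 1 a * boxIter arr (n + 1) a

theorem IsSRL.mul_le_mul_right_of_le {arr : A → A → A} (hA : IsSRL arr) {x y : A}
    (h : x ≤ y) (z : A) : x * z ≤ y * z := by
  rw [← sup_eq_right, ← hA.mul_sup, sup_eq_right.mpr h]

theorem IsSRL.arr_mono_right {arr : A → A → A} (hA : IsSRL arr) {x y : A}
    (h : x ≤ y) (z : A) : arr z x ≤ arr z y := by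
  rw [← inf_eq_left, ← hA.ax4, inf_eq_left.mpr h]

theorem IsSRL.box_le {arr : A → A → A} (hA : IsSRL arr) (a : A) : arr 1 a ≤ a := by
  simpa using hA.ax3 1 a

/-- in an srl-monoid, (1) if `a ≤ b → c` then `a·b ≤ c`;
(2) if `a·b ≤ c` then `□(a) ≤ b → c`, where `□(a) = e → a`. -/
theorem stmt4 {A : Type*} [Lattice A] [CommMonoid A] (arr : A → A → A)
    (hA : IsSRL arr) (a b c : A) :
    (a ≤ arr b c → a * b ≤ c) ∧ (a * b ≤ c → arr 1 a ≤ arr b c) := by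
  refine ⟨fun h => ?_, fun h => ?_⟩
  · calc a * b ≤ arr b c * b := hA.mul_le_mul_right_of_le h b
      _ = b * arr b c := mul_comm _ _
      _ ≤ c := hA.ax3 b c
  · refine (hA.ax6 b a).trans (hA.arr_mono_right ?_ b)
    calc b * arr 1 a = arr 1 a * b := mul_comm _ _
      _ ≤ a * b := hA.mul_le_mul_right_of_le (hA.box_le a) b
      _ ≤ c := h
end

section
/- Let A be an srl-monoid and H a convex subalgebra of A. Then θ_H is a congruence of A, i.e., θ_H is an equivalence relation on A compatible with ∧, ∨, · and →. -/
/-!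
Write `□ x = e → x` and call `q` *open* when `□ q = q`. The axioms say that every `x → y` is open,
that open elements are closed under multiplication, and that `x → y` is the largest open `q` with
`x * q ≤ y` (`IsSRL.arr_open`, `IsSRL.open_mul`, `IsSRL.le_arr`).

If `h` and `l` in `H` witness two pairs of `θ_H`, then `k = □ (h ⊓ l)` is an open element of `H`
below both, so it witnesses both pairs (`thetaH.common`). With such a `k`, the
lattice operations are compatible with witness `k`, and transitivity, multiplication and the arrow
with witness `k * k`. For the arrow, `(a → c) * (k * k)` is open and
`b * k * (a → c) * k ≤ a * (a → c) * k ≤ c * k ≤ d`, so it lies below `b → d`.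
-/

variable {A : Type*} [Lattice A] [CommMonoid A]

namespace IsSRL

variable {arr : A → A → A}

lemma mul_mono_left (hA : IsSRL arr) {a b : A} (h : a ≤ b) (c : A) : a * c ≤ b * c := by
  have := hA.mul_sup a b c
  rw [sup_eq_right.2 h] at this
  rw [this]
  exact le_sup_left

lemma mul_mono (hA : IsSRL arr) {a b c d : A} (h : a ≤ b) (h' : c ≤ d) : a * c ≤ b * d := by
  refine (hA.mul_mono_left h c).trans ?_
  rw [mul_comm b c, mul_comm b d]
  exact hA.mul_mono_left h' b

lemma arr_mono (hA : IsSRL arr) (z : A) {x y : A} (h : x ≤ y) : arr z x ≤ arr z y := by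
  have := hA.ax4 x y z
  rw [inf_eq_left.2 h] at this
  rw [this]
  exact inf_le_right

lemma box_le_s9 (hA : IsSRL arr) (x : A) : arr 1 x ≤ x := by
  simpa using hA.ax3 1 x

lemma arr_open (hA : IsSRL arr) (x y : A) : arr 1 (arr x y) = arr x y :=
  le_antisymm (hA.box_le_s9 _) (by simpa using hA.ax2 x y 1)

lemma open_mul (hA : IsSRL arr) {p q : A} (hp : arr 1 p = p) (hq : arr 1 q = q) :
    arr 1 (p * q) = p * q := by
  have := hA.ax5 p q
  rwa [hp, hq] at this

/-- Residuation relative to the open elements. -/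
lemma le_arr (hA : IsSRL arr) {x y q : A} (hq : arr 1 q = q) (h : x * q ≤ y) : q ≤ arr x y := by
  have := hA.ax6 x q
  rw [hq] at this
  exact this.trans (hA.arr_mono x h)

/-- If `b` lies below `a` and `c` below `d`, both up to an open factor `k`, then `a → c` lies below
`b → d` up to `k * k`. -/
lemma arr_mul_le (hA : IsSRL arr) {a b c d k : A} (hk : arr 1 k = k)
    (hba : b * k ≤ a) (hcd : c * k ≤ d) : arr a c * (k * k) ≤ arr b d := by
  refine hA.le_arr (hA.open_mul (hA.arr_open a c) (hA.open_mul hk hk)) ?_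
  calc b * (arr a c * (k * k)) = b * k * arr a c * k := by ac_rfl
    _ ≤ a * arr a c * k := hA.mul_mono_left (hA.mul_mono_left hba _) _
    _ ≤ c * k := hA.mul_mono_left (hA.ax3 a c) _
    _ ≤ d := hcd

lemma mul_mul_le (hA : IsSRL arr) {a b c d k : A} (hab : a * k ≤ b) (hcd : c * k ≤ d) :
    a * c * (k * k) ≤ b * d := by
  rw [mul_mul_mul_comm]
  exact hA.mul_mono hab hcd

lemma mul_le_trans (hA : IsSRL arr) {a b c k : A} (hab : a * k ≤ b) (hbc : b * k ≤ c) :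
    a * (k * k) ≤ c := by
  rw [← mul_assoc]
  exact (hA.mul_mono_left hab k).trans hbc

lemma inf_mul_le (hA : IsSRL arr) {a b c d k : A} (hab : a * k ≤ b) (hcd : c * k ≤ d) :
    (a ⊓ c) * k ≤ b ⊓ d :=
  le_inf ((hA.mul_mono_left inf_le_left k).trans hab)
    ((hA.mul_mono_left inf_le_right k).trans hcd)

lemma sup_mul_le (hA : IsSRL arr) {a b c d k : A} (hab : a * k ≤ b) (hcd : c * k ≤ d) :
    (a ⊔ c) * k ≤ b ⊔ d := by
  rw [hA.mul_sup]
  exact sup_le_sup hab hcd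

/-- Any two pairs in `θ_H` share a witness `k ∈ H` that is open; it is `□` of the meet of the two
given witnesses. -/
lemma _root_.thetaH.common (hA : IsSRL arr) {H : Set A} (hH : IsConvexSubalgebra arr H)
    {a b c d : A} (hab : thetaH H a b) (hcd : thetaH H c d) :
    ∃ k ∈ H, arr 1 k = k ∧ a * k ≤ b ∧ b * k ≤ a ∧ c * k ≤ d ∧ d * k ≤ c := by
  obtain ⟨h, hh, h1, h2⟩ := hab
  obtain ⟨l, hl, l1, l2⟩ := hcd
  have kh : arr 1 (h ⊓ l) ≤ h := (hA.box_le_s9 _).trans inf_le_left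
  have kl : arr 1 (h ⊓ l) ≤ l := (hA.box_le_s9 _).trans inf_le_right
  exact ⟨arr 1 (h ⊓ l), hH.arr_mem _ _ hH.one_mem (hH.inf_mem _ _ hh hl), hA.arr_open _ _,
    (hA.mul_mono le_rfl kh).trans h1, (hA.mul_mono le_rfl kh).trans h2,
    (hA.mul_mono le_rfl kl).trans l1, (hA.mul_mono le_rfl kl).trans l2⟩

end IsSRL

/-- for a convex subalgebra `H` of an srl-monoid, `θ_H` is a congruence. -/
theorem stmt9 {A : Type*} [Lattice A] [CommMonoid A] (arr : A → A → A)
    (hA : IsSRL arr) (H : Set A) (hH : IsConvexSubalgebra arr H) :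
    IsCongruence arr (thetaH H) := by
  refine ⟨⟨fun a => ⟨1, hH.one_mem, by simp, by simp⟩,
    fun ⟨h, hh, h1, h2⟩ => ⟨h, hh, h2, h1⟩, fun hab hbc => ?_⟩, ?_, ?_, ?_, ?_⟩
  · obtain ⟨k, hk, -, h1, h2, h3, h4⟩ := thetaH.common hA hH hab hbc
    exact ⟨k * k, hH.mul_mem _ _ hk hk, hA.mul_le_trans h1 h3, hA.mul_le_trans h4 h2⟩
  · intro a b c d hab hcd
    obtain ⟨k, hk, -, h1, h2, h3, h4⟩ := thetaH.common hA hH hab hcd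
    exact ⟨k, hk, hA.inf_mul_le h1 h3, hA.inf_mul_le h2 h4⟩
  · intro a b c d hab hcd
    obtain ⟨k, hk, -, h1, h2, h3, h4⟩ := thetaH.common hA hH hab hcd
    exact ⟨k, hk, hA.sup_mul_le h1 h3, hA.sup_mul_le h2 h4⟩
  · intro a b c d hab hcd
    obtain ⟨k, hk, -, h1, h2, h3, h4⟩ := thetaH.common hA hH hab hcd
    exact ⟨k * k, hH.mul_mem _ _ hk hk, hA.mul_mul_le h1 h3, hA.mul_mul_le h2 h4⟩
  · intro a b c d hab hcd
    obtain ⟨k, hk, hko, h1, h2, h3, h4⟩ := thetaH.common hA hH hab hcd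
    exact ⟨k * k, hH.mul_mem _ _ hk hk, hA.arr_mul_le hko h2 h3, hA.arr_mul_le hko h1 h4⟩
end

section
/- Let A be an integral srl-monoid (an srl-monoid in which e is the greatest element, written 1 = e) and H ⊆ A. The following conditions are equivalent: (1) H is a strongly convex subalgebra of A; (2) H is a convex subalgebra of A; (3) H is a □-filter of A, i.e., 1 ∈ H, H is an upset, H is closed under ·, and H is closed under □. -/
/-!
Integrality makes convexity plus `1 ∈ H` the same as being an upset, and by monotonicity of `·`
it gives `a * b ≤ a ⊓ b ≤ a ⊔ b`, so an upset closed under `·` is a sublattice. Closure under `→`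
reduces to closure under `□` because `□b ≤ a → b` (`IsSRL.box_le_arr`). The strong condition
is automatic: `1 ≤ h → a` forces `h ≤ h * (h → a) ≤ a`.
-/

variable {A : Type*} [Lattice A] [CommMonoid A]

theorem IsSRL.mul_le_mul_right_of_le_s11 {A : Type*} [Lattice A] [CommMonoid A] {arr : A → A → A}
    (hA : IsSRL arr) {a b : A} (h : a ≤ b) (c : A) : a * c ≤ b * c := by
  have := hA.mul_sup a b c
  rw [sup_eq_right.mpr h] at this
  rw [this]
  exact le_sup_left

theorem IsSRL.arr_mono_right_s11 {A : Type*} [Lattice A] [CommMonoid A] {arr : A → A → A}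
    (hA : IsSRL arr) {a b : A} (h : a ≤ b) (c : A) : arr c a ≤ arr c b := by
  have := hA.ax4 a b c
  rw [inf_eq_left.mpr h] at this
  rw [this]
  exact inf_le_right

/-- In the integral case `a * □b ≤ □b ≤ b`, so `□b ≤ a → (a * □b) ≤ a → b`. -/
theorem IsSRL.box_le_arr {A : Type*} [Lattice A] [CommMonoid A] {arr : A → A → A}
    (hA : IsSRL arr) (hInt : ∀ a : A, a ≤ 1) (a b : A) : arr 1 b ≤ arr a b :=
  (hA.ax6 a b).trans
    (hA.arr_mono_right_s11 ((hA.mul_le_mul_right_of_le_s11 (hInt a) _).trans (hA.ax3 1 b)) a)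

/-- in an integral srl-monoid (`e = 1` is the greatest element), for
`H ⊆ A` the following are equivalent: `H` is a strongly convex subalgebra, `H` is a
convex subalgebra, and `H` is a `□`-filter. -/
theorem stmt11 {A : Type*} [Lattice A] [CommMonoid A] (arr : A → A → A)
    (hA : IsSRL arr) (hInt : ∀ a : A, a ≤ 1) (H : Set A) :
    (IsStronglyConvexSubalgebra arr H ↔ IsConvexSubalgebra arr H) ∧
    (IsConvexSubalgebra arr H ↔
      ((1 : A) ∈ H ∧
       (∀ a b : A, a ∈ H → a ≤ b → b ∈ H) ∧
       (∀ a b : A, a ∈ H → b ∈ H → a * b ∈ H) ∧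
       (∀ a : A, a ∈ H → arr 1 a ∈ H))) := by
  refine ⟨⟨fun h => h.toConvex, fun h => ⟨h, fun a k hk _ hka => ?_⟩⟩, fun h => ?_, ?_⟩
  · have hle : k ≤ a := by
      have h1 := hA.mul_le_mul_right_of_le_s11 hka k
      rw [one_mul, mul_comm] at h1
      exact h1.trans (hA.ax3 k a)
    exact h.convex k 1 a hk h.one_mem hle (hInt a)
  · exact ⟨h.one_mem, fun a b ha hab => h.convex a 1 b ha h.one_mem hab (hInt b), h.mul_mem,
      fun a ha => h.arr_mem 1 a h.one_mem ha⟩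
  · rintro ⟨one_mem, upset, mul_mem, box_mem⟩
    have mul_le_right (a b : A) : a * b ≤ b := by
      simpa using hA.mul_le_mul_right_of_le_s11 (hInt a) b
    have mul_le_left (a b : A) : a * b ≤ a := mul_comm b a ▸ mul_le_right b a
    exact
      { one_mem := one_mem
        inf_mem := fun a b ha hb =>
          upset _ _ (mul_mem a b ha hb) (le_inf (mul_le_left a b) (mul_le_right a b))
        sup_mem := fun a b ha _ => upset _ _ ha le_sup_left
        mul_mem := mul_mem
        arr_mem := fun a b _ hb => upset _ _ (box_mem b hb) (hA.box_le_arr hInt a b)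
        convex := fun a _ c ha _ hac _ => upset a c ha hac }
end

section
/- Let A be an srl-monoid. Then: (a) if A satisfies E1 ((x∧y)→z = (x→z) ∨ (y→z) for all x,y,z) or A satisfies E2 (z→(x∨y) = (z→x) ∨ (z→y) for all x,y,z), then A satisfies C1 (e ≤ (x→y) ∨ (y→x) for all x,y); (b) if A satisfies C1, then for all a, b ∈ A⁻ and m ∈ ℕ, (a ∨ b)^{2^m} = a^{2^m} ∨ b^{2^m}; (c) if A satisfies E2, then for all a, b ∈ A⁻ and n, m ∈ ℕ, □^{2^n}((a ∨ b)^{2^m}) = □^{2^n}(a^{2^m}) ∨ □^{2^n}(b^{2^m}). -/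
/-!
The implication is monotone in its second argument because it preserves meets there. It is antitone
in its first argument because every value `c = z → y` is fixed by `□`, so that `x ≤ z` gives
`c ≤ x → x · c ≤ x → y`. Expanding `1 ≤ w → w` by E1 at `w = x ∧ y`, or by E2 at `w = x ∨ y`, then
yields C1.

Under C1, `a · b ≤ a · b · (a → b) ∨ a · b · (b → a) ≤ b² ∨ a²`, so squaring preserves binary joins;
iterating it gives the identity for exponents `2 ^ m`, for arbitrary `a` and `b`. Finally
`□ᵏ(a) = (□ a)ᵏ` for `k ≥ 1`, and E2 makes `□` preserve joins, so the last part follows by applying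
the identity for powers twice, the second time to the boxed elements.
-/


variable {A : Type*} [Lattice A] [CommMonoid A]

namespace IsSRL

variable {arr : A → A → A}

lemma mul_le_mul_of_le (h : IsSRL arr) {a b : A} (hab : a ≤ b) (c : A) : a * c ≤ b * c := by
  rw [← sup_eq_right, ← h.mul_sup, sup_eq_right.2 hab]

lemma arr_mono_right_s18 (h : IsSRL arr) (z : A) {x y : A} (hxy : x ≤ y) : arr z x ≤ arr z y := by
  rw [← inf_eq_left, ← h.ax4, inf_eq_left.2 hxy]

/-- Values of the implication are fixed by `□`. -/
lemma one_arr_arr (h : IsSRL arr) (x y : A) : arr 1 (arr x y) = arr x y := by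
  apply le_antisymm
  · simpa using h.ax3 1 (arr x y)
  · simpa using h.ax2 x y 1

lemma arr_anti_left (h : IsSRL arr) {x z : A} (hxz : x ≤ z) (y : A) : arr z y ≤ arr x y := by
  have h6 := h.ax6 x (arr z y)
  rw [h.one_arr_arr] at h6
  exact h6.trans (h.arr_mono_right_s18 x ((h.mul_le_mul_of_le hxz _).trans (h.ax3 z y)))

lemma one_le_arr_self (h : IsSRL arr) (x : A) : 1 ≤ arr x x := by
  simpa using h.ax1 x x

lemma prelinear_of_arr_inf (h : IsSRL arr)
    (E1 : ∀ x y z : A, arr (x ⊓ y) z = arr x z ⊔ arr y z) (x y : A) :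
    1 ≤ arr x y ⊔ arr y x := by
  have h1 := h.one_le_arr_self (x ⊓ y)
  rw [E1] at h1
  exact h1.trans (sup_le_sup (h.arr_mono_right_s18 x inf_le_right) (h.arr_mono_right_s18 y inf_le_left))

lemma prelinear_of_arr_sup (h : IsSRL arr)
    (E2 : ∀ x y z : A, arr z (x ⊔ y) = arr z x ⊔ arr z y) (x y : A) :
    1 ≤ arr x y ⊔ arr y x := by
  have h1 := h.one_le_arr_self (x ⊔ y)
  rw [E2, sup_comm] at h1
  exact h1.trans (sup_le_sup (h.arr_anti_left le_sup_left y) (h.arr_anti_left le_sup_right x))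

lemma mul_le_sq_sup_sq (h : IsSRL arr) (C1 : ∀ x y : A, 1 ≤ arr x y ⊔ arr y x) (a b : A) :
    a * b ≤ a * a ⊔ b * b := by
  have h1 := h.mul_le_mul_of_le (C1 a b) (a * b)
  rw [one_mul, h.mul_sup] at h1
  have hab : arr a b * (a * b) ≤ b * b := by
    rw [← mul_assoc, mul_comm (arr a b)]
    exact h.mul_le_mul_of_le (h.ax3 a b) b
  have hba : arr b a * (a * b) ≤ a * a := by
    rw [mul_comm a b, ← mul_assoc, mul_comm (arr b a)]
    exact h.mul_le_mul_of_le (h.ax3 b a) a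
  exact h1.trans (sup_le (hab.trans le_sup_right) (hba.trans le_sup_left))

lemma sup_sq (h : IsSRL arr) (C1 : ∀ x y : A, 1 ≤ arr x y ⊔ arr y x) (a b : A) :
    (a ⊔ b) ^ 2 = a ^ 2 ⊔ b ^ 2 := by
  have hab := h.mul_le_sq_sup_sq C1 a b
  have expand : (a ⊔ b) * (a ⊔ b) = (a * a ⊔ a * b) ⊔ (a * b ⊔ b * b) := by
    rw [h.mul_sup, mul_comm a, mul_comm b, h.mul_sup, h.mul_sup, mul_comm b a]
  rw [sq, sq, sq, expand]
  apply le_antisymm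
  · exact sup_le (sup_le le_sup_left hab) (sup_le hab le_sup_right)
  · exact sup_le_sup le_sup_left le_sup_right

lemma sup_pow_two_pow (h : IsSRL arr) (C1 : ∀ x y : A, 1 ≤ arr x y ⊔ arr y x) (a b : A) (m : ℕ) :
    (a ⊔ b) ^ (2 ^ m) = a ^ (2 ^ m) ⊔ b ^ (2 ^ m) := by
  induction m with
  | zero => simp
  | succ m ih => rw [pow_succ 2 m, pow_mul, pow_mul, pow_mul, ih, h.sup_sq C1]

end IsSRL

lemma boxIter_succ_eq_pow (arr : A → A → A) (n : ℕ) (a : A) :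
    boxIter arr (n + 1) a = arr 1 a ^ (n + 1) := by
  induction n with
  | zero => simp [boxIter]
  | succ n ih => rw [boxIter, ih, pow_succ' _ (n + 1)]

lemma boxIter_two_pow (arr : A → A → A) (n : ℕ) (a : A) :
    boxIter arr (2 ^ n) a = arr 1 a ^ (2 ^ n) := by
  obtain ⟨k, hk⟩ := Nat.exists_eq_succ_of_ne_zero (pow_ne_zero n (two_ne_zero' ℕ))
  rw [hk]
  exact boxIter_succ_eq_pow arr k a

/-- (a) E1 or E2 implies C1; (b) C1 implies
`(a ⊔ b)^{2^m} = a^{2^m} ⊔ b^{2^m}` on the negative cone; (c) E2 implies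
`□^{2^n}((a ⊔ b)^{2^m}) = □^{2^n}(a^{2^m}) ⊔ □^{2^n}(b^{2^m})` on the negative cone. -/
theorem stmt18 {A : Type*} [Lattice A] [CommMonoid A] (arr : A → A → A)
    (hA : IsSRL arr) :
    (((∀ x y z : A, arr (x ⊓ y) z = arr x z ⊔ arr y z) ∨
      (∀ x y z : A, arr z (x ⊔ y) = arr z x ⊔ arr z y)) →
      (∀ x y : A, (1 : A) ≤ arr x y ⊔ arr y x)) ∧
    ((∀ x y : A, (1 : A) ≤ arr x y ⊔ arr y x) →
      ∀ a b : A, a ≤ 1 → b ≤ 1 → ∀ m : ℕ,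
        (a ⊔ b) ^ (2 ^ m) = a ^ (2 ^ m) ⊔ b ^ (2 ^ m)) ∧
    ((∀ x y z : A, arr z (x ⊔ y) = arr z x ⊔ arr z y) →
      ∀ a b : A, a ≤ 1 → b ≤ 1 → ∀ n m : ℕ,
        boxIter arr (2 ^ n) ((a ⊔ b) ^ (2 ^ m)) =
          boxIter arr (2 ^ n) (a ^ (2 ^ m)) ⊔ boxIter arr (2 ^ n) (b ^ (2 ^ m))) := by
  refine ⟨?_, ?_, ?_⟩
  · rintro (E1 | E2)
    · exact hA.prelinear_of_arr_inf E1
    · exact hA.prelinear_of_arr_sup E2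
  · intro C1 a b _ _ m
    exact hA.sup_pow_two_pow C1 a b m
  · intro E2 a b _ _ n m
    have C1 := hA.prelinear_of_arr_sup E2
    rw [hA.sup_pow_two_pow C1, boxIter_two_pow, boxIter_two_pow, boxIter_two_pow, E2,
      hA.sup_pow_two_pow C1]
end
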